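/- For every (x,y,z) ∈ ℂ³ with y ≠ 3 and P(x,y,z) = 0, letting A₁ = [[1,1,0],[0,1,1],[0,0,1]] and A₂ as in the explicit formula (rows [0, (3x+3y+z-21)/(y-3)², -(63+x²-15x-27y+3xy+3y²)/(y-3)³], [0, -(x-3)/(y-3), (30-6x-6y+xy-z)/(y-3)²], [y-3, 0, 3+(x-3)/(y-3)]), the matrices A₁, A₂, and (A₂A₁)⁻¹ all have trace 3 and their squares have trace 3; moreover tr(A₁A₂⁻¹) = x, tr(A₁⁻¹A₂) = y, and tr(A₁A₂A₁⁻¹A₂⁻¹) = z. -/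

import Mathlib

open Matrix

noncomputable def LawtonP (x y z : ℂ) : ℂ :=
  414 - 108 * x + x ^ 3 - 108 * y + 21 * x * y + y ^ 3
    - (51 - 9 * x - 9 * y + x * y) * z + z ^ 2

lemma core_aux (a b c w : ℂ) (hb : b * w = 3 * c - c ^ 2 - 3)
    (hdet : w * a * (a + c) = (c - 1) ^ 3) :
    let A₁ : Matrix (Fin 3) (Fin 3) ℂ := !![1,1,0; 0,1,1; 0,0,1]
    let A₂ : Matrix (Fin 3) (Fin 3) ℂ := !![0, a, b; 0, c, -c - a; w, 0, 3 - c]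
    A₁.trace = 3 ∧ (A₁ * A₁).trace = 3 ∧
    A₂.trace = 3 ∧ (A₂ * A₂).trace = 3 ∧
    ((A₂ * A₁)⁻¹).trace = 3 ∧ ((A₂ * A₁)⁻¹ * (A₂ * A₁)⁻¹).trace = 3 ∧
    (A₁ * A₂⁻¹).trace = 3 - c * w ∧
    (A₁⁻¹ * A₂).trace = w + 3 ∧
    (A₁ * A₂ * A₁⁻¹ * A₂⁻¹).trace = a * w ^ 2 + 3 * c * w - 3 * w + 3 := by
  intro A₁ A₂
  have h1 : A₁⁻¹ = !![1,-1,1; 0,1,-1; 0,0,1] := by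
    apply Matrix.inv_eq_right_inv
    ext i j
    fin_cases i <;> fin_cases j <;> simp [A₁, Matrix.mul_apply, Fin.sum_univ_three]
  have h2 : A₂⁻¹ = !![c * (3 - c), -a * (3 - c), a * (-c - a) - b * c;
      (-c - a) * w, -b * w, 0; -c * w, a * w, 0] := by
    apply Matrix.inv_eq_right_inv
    ext i j
    fin_cases i <;> fin_cases j <;>
      simp [A₂, Matrix.mul_apply, Fin.sum_univ_three] <;> grind
  rw [Matrix.mul_inv_rev, h1, h2]
  refine ⟨?_, ?_, ?_, ?_, ?_, ?_, ?_, ?_, ?_⟩ <;>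
    simp [A₁, A₂, Matrix.trace, Matrix.mul_apply, Fin.sum_univ_three] <;> grind

theorem stmt_8 (x y z : ℂ) (hy : y ≠ 3) (hP : LawtonP x y z = 0) :
    let A₁ : Matrix (Fin 3) (Fin 3) ℂ := !![1,1,0; 0,1,1; 0,0,1]
    let A₂ : Matrix (Fin 3) (Fin 3) ℂ :=
      !![0, (3*x + 3*y + z - 21) / (y - 3) ^ 2,
           -(63 + x ^ 2 - 15*x - 27*y + 3*x*y + 3*y ^ 2) / (y - 3) ^ 3;
         0, -(x - 3) / (y - 3), (30 - 6*x - 6*y + x*y - z) / (y - 3) ^ 2;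
         y - 3, 0, 3 + (x - 3) / (y - 3)]
    A₁.trace = 3 ∧ (A₁ * A₁).trace = 3 ∧
    A₂.trace = 3 ∧ (A₂ * A₂).trace = 3 ∧
    ((A₂ * A₁)⁻¹).trace = 3 ∧ ((A₂ * A₁)⁻¹ * (A₂ * A₁)⁻¹).trace = 3 ∧
    (A₁ * A₂⁻¹).trace = x ∧
    (A₁⁻¹ * A₂).trace = y ∧
    (A₁ * A₂ * A₁⁻¹ * A₂⁻¹).trace = z := by
  have hw : y - 3 ≠ 0 := sub_ne_zero.mpr hy
  unfold LawtonP at hP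
  have key := core_aux ((3*x + 3*y + z - 21) / (y - 3) ^ 2)
    (-(63 + x ^ 2 - 15*x - 27*y + 3*x*y + 3*y ^ 2) / (y - 3) ^ 3)
    (-(x - 3) / (y - 3)) (y - 3)
    (by field_simp; ring)
    (by field_simp; linear_combination hP)
  have e1 : -(-(x - 3) / (y - 3)) - (3*x + 3*y + z - 21) / (y - 3) ^ 2
      = (30 - 6*x - 6*y + x*y - z) / (y - 3) ^ 2 := by field_simp; ring
  have e2 : 3 - -(x - 3) / (y - 3) = 3 + (x - 3) / (y - 3) := by ring
  have e3 : 3 - -(x - 3) / (y - 3) * (y - 3) = x := by field_simp; ring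
  have e4 : y - 3 + 3 = y := by ring
  have e5 : (3*x + 3*y + z - 21) / (y - 3) ^ 2 * (y - 3) ^ 2
      + 3 * (-(x - 3) / (y - 3)) * (y - 3) - 3 * (y - 3) + 3 = z := by field_simp; ring
  rw [e1, e2, e3, e4, e5] at key
  exact key
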